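/- Let b>0, d∈ℕ and let (G_n)_{n≥0} be a (b,d)-expander. There exist constants δ(b,d)<1 and K(b,d)<∞, depending only on b and d, such that for every n: sup over p∈[0,1] and over edges e∈E_n of ‖Δ_{e,p} L_n^{(1)}‖_{1,p} ≤ K(b,d)·|V_n|^{δ(b,d)}. -/

import Mathlib

open Filter

noncomputable section

/-- The spanning subgraph of `G` determined by the configuration `x : {0,1}^E`:
an edge of `G` is retained iff its coordinate equals `true`. -/
def percoGraph {V : Type*} (G : SimpleGraph V) (x : G.edgeSet → Bool) : SimpleGraph V :=
  SimpleGraph.fromEdgeSet {e : Sym2 V | ∃ h : e ∈ G.edgeSet, x ⟨e, h⟩ = true}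

/-- The vertex set of the connected component of `v` in the configuration `x`. -/
def percoComp {V : Type*} (G : SimpleGraph V) (x : G.edgeSet → Bool) (v : V) : Set V :=
  {u | (percoGraph G x).Reachable v u}

/-- The number of vertices of the connected component of `v` in the configuration `x`. -/
def compSize {V : Type*} (G : SimpleGraph V) (x : G.edgeSet → Bool) (v : V) : ℕ :=
  (percoComp G x v).ncard

/-- `L⁽¹⁾`: the number of vertices of the largest connected component of the configuration. -/
def largestComp {V : Type*} (G : SimpleGraph V) (x : G.edgeSet → Bool) : ℕ :=
  sSup (Set.range (compSize G x))

/-- The probability of a single configuration under the product Bernoulli(p) measure. -/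
def configProb {E : Type*} (p : ℝ) (x : E → Bool) : ℝ :=
  ∏ᶠ e : E, if x e then p else 1 - p

/-- The product Bernoulli(p) probability of a set of configurations. -/
def probC {E : Type*} (p : ℝ) (A : Set (E → Bool)) : ℝ :=
  ∑ᶠ x ∈ A, configProb p x

/-- Expectation under the product Bernoulli(p) measure. -/
def expC {E : Type*} (p : ℝ) (f : (E → Bool) → ℝ) : ℝ :=
  ∑ᶠ x : E → Bool, configProb p x * f x

/-- Variance under the product Bernoulli(p) measure. -/
def varC {E : Type*} (p : ℝ) (f : (E → Bool) → ℝ) : ℝ :=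
  expC p (fun x => f x ^ 2) - (expC p f) ^ 2

open Classical in
/-- The configuration `x` with coordinate `e` set to `b`. -/
def setEdge {E : Type*} (x : E → Bool) (e : E) (b : Bool) : E → Bool :=
  fun e' => if e' = e then b else x e'

/-- The operator `Δ_{e,p} f (x) = f(x) - ∫ f(x) dx(e)`. -/
def deltaE {E : Type*} (p : ℝ) (f : (E → Bool) → ℝ) (e : E) (x : E → Bool) : ℝ :=
  f x - (p * f (setEdge x e true) + (1 - p) * f (setEdge x e false))

/-- The norm `‖g‖_{1,p}`. -/
def norm1 {E : Type*} (p : ℝ) (g : (E → Bool) → ℝ) : ℝ :=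
  expC p fun x => |g x|

/-- The squared norm `‖g‖_{2,p}²`. -/
def sqNorm2 {E : Type*} (p : ℝ) (g : (E → Bool) → ℝ) : ℝ :=
  expC p fun x => g x ^ 2

/-- `|E(S, Sᶜ)|`: the number of edges of `G` with one endpoint in `S` and the other outside `S`
(counted via the ordered pair whose first coordinate lies in `S`). -/
def edgeBoundaryCard {V : Type*} (G : SimpleGraph V) (S : Set V) : ℕ :=
  {q : V × V | G.Adj q.1 q.2 ∧ q.1 ∈ S ∧ q.2 ∉ S}.ncard

/-- The maximal degree of `G` is at most `d`. -/
def DegreeLE {V : Type*} (G : SimpleGraph V) (d : ℕ) : Prop :=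
  ∀ v, {u | G.Adj v u}.ncard ≤ d

/-- The Cheeger (edge-isoperimetric) constant of `G` is strictly greater than `b`. -/
def CheegerGT {V : Type*} (G : SimpleGraph V) (b : ℝ) : Prop :=
  ∀ S : Set V, 0 < S.ncard → 2 * S.ncard ≤ Nat.card V →
    b * (S.ncard : ℝ) < (edgeBoundaryCard G S : ℝ)

/-- A `(b,d)`-expander: a sequence of finite graphs with `|V_n| → ∞`, maximal degree at most `d`
and Cheeger constant greater than `b`. -/
structure ExpanderSeq (b : ℝ) (d : ℕ) where
  V : ℕ → Type
  finV : ∀ n, Finite (V n)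
  G : ∀ n, SimpleGraph (V n)
  card_tendsto : Tendsto (fun n => Nat.card (V n)) atTop atTop
  degree_le : ∀ n, DegreeLE (G n) d
  cheeger_gt : ∀ n, CheegerGT (G n) b

/-!
Opening a single edge `uv` enlarges the largest cluster by at most the size of the smaller of the
two clusters that it merges, so it suffices to bound `p` times the expected size of the smaller of
the clusters of `u` and `v`, on the event that they differ. For `p ≤ 1 / (2 d)` a comparison with a
subcritical branching process gives a constant.

For larger `p`, balls in an expander grow geometrically until they fill almost the whole graph.
Hence if both clusters have more than `|V| / λ ^ i` vertices, where `λ > 1` depends on `b` and `d`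
only, then many vertices of the first lie within distance `2 i` of the second. Such contact points
are rare: opening one edge next to a point at distance `k + 1` either joins the clusters, so that
the edge is pivotal for the monotone event `u ↔ v`, or creates a point at distance `k`. The expected
number of pivotal edges is `O(√|E| / p)` because the coordinates are uncorrelated, so the expected
number of contact points at distance `2 i` is at most `C ^ i * √|V|`. Choosing `i` to be a small
multiple of `log |V|` balances the two bounds.
-/

section Bernoulli

variable {E : Type*} {p : ℝ}

@[simp]
lemma setEdge_same (x : E → Bool) (e : E) (b : Bool) : setEdge x e b e = b := by
  simp [setEdge]

lemma setEdge_of_ne {e f : E} (h : f ≠ e) (x : E → Bool) (b : Bool) : setEdge x e b f = x f := by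
  simp [setEdge, h]

@[simp]
lemma setEdge_setEdge (x : E → Bool) (e : E) (b c : Bool) :
    setEdge (setEdge x e b) e c = setEdge x e c := by
  ext f
  by_cases h : f = e <;> simp [setEdge, h]

lemma setEdge_eq_self {x : E → Bool} {e : E} {b : Bool} (h : x e = b) : setEdge x e b = x := by
  ext f
  by_cases hf : f = e <;> simp [setEdge, hf, h]

lemma le_setEdge_true (x : E → Bool) (e : E) : x ≤ setEdge x e true := by
  intro f
  by_cases hf : f = e
  · simp [hf, Bool.le_true]
  · simp [setEdge_of_ne hf]

lemma setEdge_false_le (x : E → Bool) (e : E) : setEdge x e false ≤ x := by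
  intro f
  by_cases hf : f = e
  · simp [hf, Bool.false_le]
  · simp [setEdge_of_ne hf]

lemma configProb_nonneg (hp : p ∈ Set.Icc (0 : ℝ) 1) (x : E → Bool) : 0 ≤ configProb p x :=
  finprod_nonneg fun e => by
    split_ifs
    · exact hp.1
    · exact sub_nonneg.2 hp.2

lemma expC_eq_sum [Fintype (E → Bool)] (p : ℝ) (f : (E → Bool) → ℝ) :
    expC p f = ∑ x, configProb p x * f x :=
  finsum_eq_sum_of_fintype _

lemma expC_nonneg (hp : p ∈ Set.Icc (0 : ℝ) 1) {f : (E → Bool) → ℝ} (h : ∀ x, 0 ≤ f x) :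
    0 ≤ expC p f :=
  finsum_nonneg fun x => mul_nonneg (configProb_nonneg hp x) (h x)

lemma probC_eq_expC_indicator (p : ℝ) (A : Set (E → Bool)) :
    probC p A = expC p (A.indicator 1) := by
  classical
  simp [probC, expC, finsum_mem_def, Set.indicator_apply]

lemma expC_const_mul (p c : ℝ) (f : (E → Bool) → ℝ) :
    expC p (fun x => c * f x) = c * expC p f := by
  simp only [expC, mul_left_comm _ c]
  exact (mul_finsum _ c).symm

lemma probC_nonneg (hp : p ∈ Set.Icc (0 : ℝ) 1) (A : Set (E → Bool)) : 0 ≤ probC p A := by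
  rw [probC_eq_expC_indicator]
  exact expC_nonneg hp fun x => Set.indicator_nonneg (fun _ _ => zero_le_one) x

variable [Finite E]

lemma configProb_setEdge_balance (p : ℝ) (x : E → Bool) (e : E) :
    (1 - p) * configProb p (setEdge x e true) = p * configProb p (setEdge x e false) := by
  classical
  have := Fintype.ofFinite E
  have hoff : ∏ f ∈ Finset.univ.erase e, (if setEdge x e true f then p else 1 - p) =
      ∏ f ∈ Finset.univ.erase e, (if setEdge x e false f then p else 1 - p) :=
    Finset.prod_congr rfl fun f hf => by
      rw [setEdge_of_ne (Finset.ne_of_mem_erase hf), setEdge_of_ne (Finset.ne_of_mem_erase hf)]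
  simp only [configProb, finprod_eq_prod_of_fintype,
    ← Finset.mul_prod_erase Finset.univ _ (Finset.mem_univ e), setEdge_same, hoff, if_true,
    Bool.false_eq_true, if_false]
  ring

lemma expC_add (p : ℝ) (f g : (E → Bool) → ℝ) :
    expC p (fun x => f x + g x) = expC p f + expC p g := by
  simp only [expC, mul_add]
  exact finsum_add_distrib (Set.toFinite _) (Set.toFinite _)

lemma expC_sub (p : ℝ) (f g : (E → Bool) → ℝ) :
    expC p (fun x => f x - g x) = expC p f - expC p g := by
  simp only [expC, mul_sub]
  exact finsum_sub_distrib (Set.toFinite _) (Set.toFinite _)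

lemma expC_sum {ι : Type*} (p : ℝ) (s : Finset ι) (f : ι → (E → Bool) → ℝ) :
    expC p (fun x => ∑ i ∈ s, f i x) = ∑ i ∈ s, expC p (f i) := by
  simp only [expC, Finset.mul_sum]
  exact finsum_sum_comm _ _ fun _ _ => Set.toFinite _

lemma expC_mono (hp : p ∈ Set.Icc (0 : ℝ) 1) {f g : (E → Bool) → ℝ} (h : ∀ x, f x ≤ g x) :
    expC p f ≤ expC p g := by
  have := Fintype.ofFinite (E → Bool)
  simp only [expC_eq_sum]
  gcongr with x
  · exact configProb_nonneg hp x
  · exact h x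

lemma expC_const (p c : ℝ) : expC p (fun _ : E → Bool => c) = c := by
  classical
  have := Fintype.ofFinite E
  have hone : ∑ x : E → Bool, configProb p x = 1 := by
    simp only [configProb, finprod_eq_prod_of_fintype]
    rw [← Fintype.piFinset_univ,
      ← Finset.prod_univ_sum (fun _ => Finset.univ) fun _ (b : Bool) => if b then p else 1 - p]
    simp
  rw [expC_eq_sum, ← Finset.sum_mul, hone, one_mul]

lemma sq_expC_le (hp : p ∈ Set.Icc (0 : ℝ) 1) (f : (E → Bool) → ℝ) :
    expC p f ^ 2 ≤ expC p (fun x => f x ^ 2) := by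
  have hvar : 0 ≤ expC p (fun x => (f x - expC p f) ^ 2) := expC_nonneg hp fun x => sq_nonneg _
  have hexp (x : E → Bool) :
      (f x - expC p f) ^ 2 = f x ^ 2 - 2 * expC p f * f x + expC p f ^ 2 := by ring
  simp only [hexp, expC_add, expC_sub, expC_const_mul, expC_const] at hvar
  linarith

-- The terms of `x` and of `x` flipped at `e` cancel, by detailed balance.
lemma expC_deltaE (p : ℝ) (f : (E → Bool) → ℝ) (e : E) : expC p (deltaE p f e) = 0 := by
  classical
  have := Fintype.ofFinite E
  rw [expC_eq_sum]
  refine Finset.sum_involution (fun x _ => setEdge x e (!x e)) (fun x _ => ?_)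
    (fun x _ _ h => ?_) (fun _ _ => Finset.mem_univ _) (fun x _ => ?_)
  · have hbal := configProb_setEdge_balance p x e
    cases hx : x e
    · rw [setEdge_eq_self hx] at hbal
      simp only [deltaE, setEdge_setEdge, setEdge_eq_self hx, Bool.not_false]
      linear_combination (f (setEdge x e true) - f x) * hbal
    · rw [setEdge_eq_self hx] at hbal
      simp only [deltaE, setEdge_setEdge, setEdge_eq_self hx, Bool.not_true]
      linear_combination (f x - f (setEdge x e false)) * hbal
  · simpa using congrFun h e
  · simp [setEdge_eq_self]

lemma expC_eq_resample (p : ℝ) (f : (E → Bool) → ℝ) (e : E) :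
    expC p f = p * expC p (fun x => f (setEdge x e true)) +
      (1 - p) * expC p (fun x => f (setEdge x e false)) := by
  have h := expC_deltaE p f e
  unfold deltaE at h
  rw [expC_sub, expC_add, expC_const_mul, expC_const_mul] at h
  linarith

lemma expC_setEdge_true_le (hp : p ∈ Set.Icc (0 : ℝ) 1) {f : (E → Bool) → ℝ} (hf : ∀ x, 0 ≤ f x)
    (e : E) : p * expC p (fun x => f (setEdge x e true)) ≤ expC p f := by
  rw [expC_eq_resample p f e]
  exact le_add_of_nonneg_right
    (mul_nonneg (sub_nonneg.2 hp.2) (expC_nonneg hp fun x => hf _))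

lemma expC_setEdge_false_le (hp : p ∈ Set.Icc (0 : ℝ) 1) {f : (E → Bool) → ℝ} (hf : ∀ x, 0 ≤ f x)
    (e : E) : (1 - p) * expC p (fun x => f (setEdge x e false)) ≤ expC p f := by
  rw [expC_eq_resample p f e]
  exact le_add_of_nonneg_left (mul_nonneg hp.1 (expC_nonneg hp fun x => hf _))

lemma expC_ite_mul (p : ℝ) (f : (E → Bool) → ℝ) (e : E) :
    expC p (fun x => if x e then f x else 0) = p * expC p (fun x => f (setEdge x e true)) := by
  rw [expC_eq_resample p _ e]
  simp [expC_const]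

/-- The centred coordinate `1_{x(e) = 1} - p` of the edge `e`, an orthogonal family under the
product measure. -/
def centredEdge (p : ℝ) (e : E) (x : E → Bool) : ℝ :=
  (if x e then 1 else 0) - p

lemma expC_centredEdge_mul (p : ℝ) (f : (E → Bool) → ℝ) (e : E) :
    expC p (fun x => centredEdge p e x * f x) =
      p * (expC p (fun x => f (setEdge x e true)) - expC p f) := by
  simp only [centredEdge, sub_mul, ite_mul, one_mul, zero_mul, expC_sub, expC_ite_mul,
    expC_const_mul, mul_sub]

lemma expC_centredEdge_mul_centredEdge (p : ℝ) {e f : E} (h : f ≠ e) :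
    expC p (fun x => centredEdge p e x * centredEdge p f x) = 0 := by
  have hf (x : E → Bool) : centredEdge p f (setEdge x e true) = centredEdge p f x := by
    simp only [centredEdge, setEdge_of_ne h]
  simp only [expC_centredEdge_mul, hf, sub_self, mul_zero]

lemma expC_sq_sum_centredEdge_le [Fintype E] (hp : p ∈ Set.Icc (0 : ℝ) 1) :
    expC p (fun x : E → Bool => (∑ e, centredEdge p e x) ^ 2) ≤ Fintype.card E := by
  have hdiag (e : E) : expC p (fun x => centredEdge p e x * centredEdge p e x) ≤ 1 := by
    rw [← expC_const (E := E) p 1]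
    refine expC_mono hp fun x => ?_
    unfold centredEdge
    split_ifs <;> nlinarith [hp.1, hp.2]
  calc expC p (fun x : E → Bool => (∑ e, centredEdge p e x) ^ 2)
      = ∑ e, ∑ f, expC p (fun x => centredEdge p e x * centredEdge p f x) := by
        simp only [sq, Finset.sum_mul_sum, expC_sum]
    _ = ∑ e : E, expC p (fun x => centredEdge p e x * centredEdge p e x) :=
        Finset.sum_congr rfl fun e _ => Fintype.sum_eq_single e fun f hf =>
          expC_centredEdge_mul_centredEdge p hf
    _ ≤ ∑ e : E, 1 := Finset.sum_le_sum fun e _ => hdiag e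
    _ = Fintype.card E := by simp

lemma probC_union_le (hp : p ∈ Set.Icc (0 : ℝ) 1) (A B : Set (E → Bool)) :
    probC p (A ∪ B) ≤ probC p A + probC p B := by
  classical
  simp only [probC_eq_expC_indicator, ← expC_add]
  refine expC_mono hp fun x => ?_
  by_cases hA : x ∈ A <;> by_cases hB : x ∈ B <;> simp [hA, hB]

lemma probC_setEdge_true_mem_le (hp : p ∈ Set.Icc (0 : ℝ) 1) (A : Set (E → Bool)) (e : E) :
    p * probC p {x | setEdge x e true ∈ A} ≤ probC p A := by
  simp only [probC_eq_expC_indicator]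
  exact expC_setEdge_true_le hp (fun x => Set.indicator_nonneg (fun _ _ => zero_le_one) x) e

lemma expC_ncard {ι : Type*} [Fintype ι] (p : ℝ) (A : (E → Bool) → Set ι) :
    expC p (fun x => ((A x).ncard : ℝ)) = ∑ i, probC p {x | i ∈ A x} := by
  classical
  simp only [probC_eq_expC_indicator, ← expC_sum]
  congr 1 with x
  simp [Set.indicator_apply, Set.ncard_eq_toFinset_card']

-- Up to sign, the left-hand side is the covariance of `1_A` with the sum of the centred
-- coordinates, whose variance is at most `|E|`.
lemma mul_sum_probC_pivotal_le_sqrt_card [Fintype E] (hp : p ∈ Set.Icc (0 : ℝ) 1)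
    {A : Set (E → Bool)} (hA : IsLowerSet A) :
    p * ∑ e, probC p {x | x ∈ A ∧ setEdge x e true ∉ A} ≤ √(Fintype.card E) := by
  set h : (E → Bool) → ℝ := A.indicator 1 with hh
  set Y : (E → Bool) → ℝ := fun x => (∑ e, centredEdge p e x) * h x
  have hpivotal (e : E) : probC p {x | x ∈ A ∧ setEdge x e true ∉ A} =
      expC p h - expC p (fun x => h (setEdge x e true)) := by
    rw [probC_eq_expC_indicator, ← expC_sub]
    congr 1 with x
    by_cases hx : setEdge x e true ∈ A
    · simp [hh, hx, hA (le_setEdge_true x e) hx]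
    · by_cases hx' : x ∈ A <;> simp [hh, hx, hx']
  have hcov : p * ∑ e, probC p {x | x ∈ A ∧ setEdge x e true ∉ A} = -expC p Y := by
    simp only [Y, Finset.sum_mul, expC_sum, expC_centredEdge_mul, hpivotal, Finset.mul_sum,
      ← Finset.sum_neg_distrib]
    exact Finset.sum_congr rfl fun e _ => by ring
  have hY : expC p (fun x => Y x ^ 2) ≤ Fintype.card E := by
    refine (expC_mono hp fun x => ?_).trans (expC_sq_sum_centredEdge_le hp)
    by_cases hx : x ∈ A
    · simp [Y, hh, hx]
    · simpa [Y, hh, hx] using sq_nonneg _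
  calc p * ∑ e, probC p {x | x ∈ A ∧ setEdge x e true ∉ A}
      ≤ |expC p Y| := hcov ▸ neg_le_abs _
    _ ≤ √(Fintype.card E) := Real.abs_le_sqrt ((sq_expC_le hp Y).trans hY)

lemma norm1_deltaE (hp : p ∈ Set.Icc (0 : ℝ) 1) (f : (E → Bool) → ℝ) (e : E) :
    norm1 p (deltaE p f e) =
      2 * (p * ((1 - p) * expC p fun x => |f (setEdge x e true) - f (setEdge x e false)|)) := by
  have htrue (x : E → Bool) : deltaE p f e (setEdge x e true) =
      (1 - p) * (f (setEdge x e true) - f (setEdge x e false)) := by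
    simp only [deltaE, setEdge_setEdge]
    ring
  have hfalse (x : E → Bool) : deltaE p f e (setEdge x e false) =
      -(p * (f (setEdge x e true) - f (setEdge x e false))) := by
    simp only [deltaE, setEdge_setEdge]
    ring
  rw [norm1, expC_eq_resample p _ e]
  simp only [htrue, hfalse, abs_neg, abs_mul, abs_of_nonneg hp.1, abs_of_nonneg (sub_nonneg.2 hp.2),
    expC_const_mul]
  ring

end Bernoulli

section Percolation

variable {V : Type*} {G : SimpleGraph V}

lemma percoGraph_adj {x : G.edgeSet → Bool} {a c : V} :
    (percoGraph G x).Adj a c ↔ ∃ h : G.Adj a c, x ⟨s(a, c), h⟩ = true := by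
  simp only [percoGraph, SimpleGraph.fromEdgeSet_adj, Set.mem_ofPred_eq]
  exact ⟨fun h => h.1, fun h => ⟨h, h.1.ne⟩⟩

lemma percoGraph_mono : Monotone (percoGraph G) := fun _ _ h =>
  SimpleGraph.fromEdgeSet_mono fun _ ⟨he, hx⟩ => ⟨he, top_unique (hx.ge.trans (h _))⟩

lemma percoGraph_setEdge_true_adj {x : G.edgeSet → Bool} {e : G.edgeSet} {a c : V} :
    (percoGraph G (setEdge x e true)).Adj a c ↔
      (percoGraph G x).Adj a c ∨ s(a, c) = (e : Sym2 V) := by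
  by_cases hac : s(a, c) = (e : Sym2 V)
  · obtain ⟨_, he⟩ := e
    subst hac
    simpa [percoGraph_adj] using he
  · simp only [percoGraph_adj, hac, or_false]
    exact exists_congr fun h => by rw [setEdge_of_ne fun h' => hac (congrArg Subtype.val h')]

lemma percoComp_mono (v : V) : Monotone fun x => percoComp G x v :=
  fun _ _ h _ hw => hw.mono (percoGraph_mono h)

lemma mem_percoComp_self (x : G.edgeSet → Bool) (v : V) : v ∈ percoComp G x v :=
  SimpleGraph.Reachable.refl v

lemma mem_percoComp_of_adj {x : G.edgeSet → Bool} {v a c : V} (ha : a ∈ percoComp G x v)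
    (hac : (percoGraph G x).Adj a c) : c ∈ percoComp G x v :=
  ha.trans hac.reachable

lemma percoComp_subset {x : G.edgeSet → Bool} {z : V} {S : Set V} (hz : z ∈ S)
    (hS : ∀ a ∈ S, ∀ c, (percoGraph G x).Adj a c → c ∈ S) : percoComp G x z ⊆ S := by
  intro w hw
  rw [percoComp, Set.mem_ofPred_eq, SimpleGraph.reachable_iff_reflTransGen] at hw
  induction hw with
  | refl => exact hz
  | tail _ hadj ih => exact hS _ ih _ hadj

lemma percoComp_setEdge_true_subset {x : G.edgeSet → Bool} {e : G.edgeSet} {u v z : V} {S : Set V}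
    (he : (e : Sym2 V) = s(u, v)) (hz : z ∈ S) (huv : u ∈ S ↔ v ∈ S)
    (hS : ∀ a ∈ S, ∀ c, (percoGraph G x).Adj a c → c ∈ S) :
    percoComp G (setEdge x e true) z ⊆ S := by
  refine percoComp_subset hz fun a ha c hac => ?_
  rcases percoGraph_setEdge_true_adj.1 hac with hac | hac
  · exact hS a ha c hac
  · rcases Sym2.eq_iff.1 (hac.trans he) with ⟨rfl, rfl⟩ | ⟨rfl, rfl⟩
    · exact huv.1 ha
    · exact huv.2 ha

open Classical in
/-- The size of the smaller of the clusters of `u` and `v`, set to `0` when these clusters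
coincide. It bounds the growth of the largest cluster when an edge `uv` is opened. -/
def mergeSize (G : SimpleGraph V) (u v : V) (x : G.edgeSet → Bool) : ℕ :=
  if (percoGraph G x).Reachable u v then 0 else min (compSize G x u) (compSize G x v)

lemma largestComp_le {x : G.edgeSet → Bool} {m : ℕ} (h : ∀ v, compSize G x v ≤ m) :
    largestComp G x ≤ m :=
  csSup_le' (Set.forall_mem_range.2 h)

variable [Finite V]

lemma compSize_le_largestComp (x : G.edgeSet → Bool) (v : V) : compSize G x v ≤ largestComp G x :=
  le_csSup (Set.finite_range _).bddAbove ⟨v, rfl⟩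

lemma largestComp_mono : Monotone (largestComp G) := fun _ y h =>
  largestComp_le fun v =>
    (Set.ncard_le_ncard (percoComp_mono v h) (Set.toFinite _)).trans (compSize_le_largestComp y v)

lemma largestComp_setEdge_true_le (x : G.edgeSet → Bool) {e : G.edgeSet} {u v : V}
    (he : (e : Sym2 V) = s(u, v)) :
    largestComp G (setEdge x e true) ≤ largestComp G x + mergeSize G u v x := by
  have hstay {z : V} (hz : u ∈ percoComp G x z ↔ v ∈ percoComp G x z) :
      compSize G (setEdge x e true) z ≤ largestComp G x :=
    (Set.ncard_le_ncard (percoComp_setEdge_true_subset he (mem_percoComp_self x z) hz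
      fun _ ha _ => mem_percoComp_of_adj ha) (Set.toFinite _)).trans (compSize_le_largestComp x z)
  refine largestComp_le fun z => ?_
  by_cases huv : (percoGraph G x).Reachable u v
  · exact (hstay ⟨fun h => h.trans huv, fun h => h.trans huv.symm⟩).trans (Nat.le_add_right _ _)
  by_cases hz : z ∈ percoComp G x u ∪ percoComp G x v
  · calc compSize G (setEdge x e true) z
        ≤ (percoComp G x u ∪ percoComp G x v).ncard := by
          refine Set.ncard_le_ncard (percoComp_setEdge_true_subset he hz ?_ ?_) (Set.toFinite _)
          · exact iff_of_true (.inl (mem_percoComp_self x u)) (.inr (mem_percoComp_self x v))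
          · exact fun a ha c hac => ha.imp (mem_percoComp_of_adj · hac) (mem_percoComp_of_adj · hac)
      _ ≤ compSize G x u + compSize G x v := Set.ncard_union_le _ _
      _ = max (compSize G x u) (compSize G x v) + mergeSize G u v x := by
          rw [mergeSize, if_neg huv, max_add_min]
      _ ≤ largestComp G x + mergeSize G u v x := by
          gcongr
          exact max_le (compSize_le_largestComp x u) (compSize_le_largestComp x v)
  · rw [Set.mem_union, not_or] at hz
    exact (hstay (iff_of_false (hz.1 ·.symm) (hz.2 ·.symm))).trans (Nat.le_add_right _ _)

lemma abs_largestComp_sub_le (x : G.edgeSet → Bool) {e : G.edgeSet} {u v : V}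
    (he : (e : Sym2 V) = s(u, v)) :
    |(largestComp G (setEdge x e true) : ℝ) - largestComp G (setEdge x e false)| ≤
      mergeSize G u v (setEdge x e false) := by
  have hle : largestComp G (setEdge x e false) ≤ largestComp G (setEdge x e true) :=
    largestComp_mono ((setEdge_false_le x e).trans (le_setEdge_true x e))
  have hmerge := largestComp_setEdge_true_le (setEdge x e false) he
  rw [setEdge_setEdge] at hmerge
  rw [abs_of_nonneg (sub_nonneg.2 (Nat.cast_le.2 hle)), sub_le_iff_le_add']
  exact_mod_cast hmerge

lemma norm1_deltaE_largestComp_le_mergeSize {p : ℝ} (hp : p ∈ Set.Icc (0 : ℝ) 1)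
    {e : G.edgeSet} {u v : V} (he : (e : Sym2 V) = s(u, v)) :
    norm1 p (deltaE p (fun x => (largestComp G x : ℝ)) e) ≤
      2 * (p * expC p fun x => (mergeSize G u v x : ℝ)) := by
  have hp0 := hp.1
  have hp1 := sub_nonneg.2 hp.2
  rw [norm1_deltaE hp]
  gcongr 2 * (p * ?_)
  calc (1 - p) * expC p (fun x =>
        |(largestComp G (setEdge x e true) : ℝ) - largestComp G (setEdge x e false)|)
      ≤ (1 - p) * expC p (fun x => (mergeSize G u v (setEdge x e false) : ℝ)) := by
        gcongr
        exact expC_mono hp fun x => abs_largestComp_sub_le x he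
    _ ≤ expC p fun x => (mergeSize G u v x : ℝ) :=
        expC_setEdge_false_le hp (f := fun x => (mergeSize G u v x : ℝ)) (fun x => by positivity) e

end Percolation

section Subcritical

variable {V : Type*} {G : SimpleGraph V} {d : ℕ} {p : ℝ}

lemma DegreeLE.degree_le (hd : DegreeLE G d) (v : V) [Fintype (G.neighborSet v)] :
    G.degree v ≤ d := by
  rw [← SimpleGraph.card_neighborSet_eq_degree, ← Nat.card_eq_fintype_card,
    Nat.card_coe_set_eq]
  exact hd v

/-- The vertices joined to `u` by an open path none of whose steps meets `F`: the part of the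
cluster of `u` left to explore once `F` has been explored. -/
def avoidComp (G : SimpleGraph V) (F : Set V) (x : G.edgeSet → Bool) (u : V) : Set V :=
  {w | Relation.ReflTransGen (fun a c => (percoGraph G x).Adj a c ∧ a ∉ F ∧ c ∉ F) u w}

lemma avoidComp_empty (x : G.edgeSet → Bool) (u : V) : avoidComp G ∅ x u = percoComp G x u := by
  simp [avoidComp, percoComp, SimpleGraph.reachable_iff_reflTransGen]

lemma avoidComp_of_mem {F : Set V} {u : V} (hu : u ∈ F) (x : G.edgeSet → Bool) :
    avoidComp G F x u ⊆ {u} := by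
  intro w hw
  rcases Relation.ReflTransGen.cases_head hw with rfl | ⟨_, h, _⟩
  · rfl
  · exact absurd hu h.2.1

lemma avoidComp_setEdge_true_subset {F : Set V} {e : G.edgeSet} {u : V} (hue : u ∈ (e : Sym2 V))
    (hu : u ∈ F) (x : G.edgeSet → Bool) (v : V) :
    avoidComp G F (setEdge x e true) v ⊆ avoidComp G F x v := by
  refine Relation.ReflTransGen.mono (fun a c ⟨hac, ha, hc⟩ => ⟨?_, ha, hc⟩) v
  refine (percoGraph_setEdge_true_adj.1 hac).resolve_right fun he => ?_
  rw [← he, Sym2.mem_iff] at hue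
  rcases hue with rfl | rfl
  exacts [ha hu, hc hu]

lemma avoidComp_subset_iUnion_neighbor (F : Set V) (x : G.edgeSet → Bool) (u : V) :
    avoidComp G F x u ⊆
      {u} ∪ ⋃ v : G.neighborSet u, {w | x ⟨s(u, v), v.2⟩ ∧ w ∈ avoidComp G (insert u F) x v} := by
  intro w hw
  rw [avoidComp, Set.mem_ofPred_eq] at hw
  induction hw with
  | refl => exact .inl rfl
  | @tail a c _ hac ih =>
    obtain ⟨hadj, ha, hc⟩ := hac
    by_cases hau : a = u
    · subst hau
      obtain ⟨h, hx⟩ := percoGraph_adj.1 hadj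
      exact .inr (Set.mem_iUnion.2 ⟨⟨c, h⟩, hx, .refl⟩)
    by_cases hcu : c = u
    · exact .inl hcu
    obtain ⟨v, hx, hv⟩ := Set.mem_iUnion.1 (ih.resolve_left hau)
    exact .inr (Set.mem_iUnion.2 ⟨v, hx, hv.tail ⟨hadj, by simp [hau, ha], by simp [hcu, hc]⟩⟩)

variable [Finite V]

lemma expC_ite_ncard_avoidComp_le (hp : p ∈ Set.Icc (0 : ℝ) 1) {F : Set V} {e : G.edgeSet} {u : V}
    (hue : u ∈ (e : Sym2 V)) (hu : u ∈ F) (v : V) :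
    expC p (fun x => if x e then ((avoidComp G F x v).ncard : ℝ) else 0) ≤
      p * expC p fun x => ((avoidComp G F x v).ncard : ℝ) := by
  rw [expC_ite_mul p (fun x => ((avoidComp G F x v).ncard : ℝ)) e]
  refine mul_le_mul_of_nonneg_left (expC_mono hp fun x => ?_) hp.1
  exact_mod_cast Set.ncard_le_ncard (avoidComp_setEdge_true_subset hue hu x v) (Set.toFinite _)

lemma ncard_avoidComp_le (F : Set V) (x : G.edgeSet → Bool) (u : V) [Fintype (G.neighborSet u)] :
    (avoidComp G F x u).ncard ≤ 1 + ∑ v : G.neighborSet u,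
      if x ⟨s(u, v), v.2⟩ then (avoidComp G (insert u F) x v).ncard else 0 := by
  calc (avoidComp G F x u).ncard
      ≤ ({u} ∪ ⋃ v : G.neighborSet u,
          {w | x ⟨s(u, v), v.2⟩ ∧ w ∈ avoidComp G (insert u F) x v}).ncard :=
        Set.ncard_le_ncard (avoidComp_subset_iUnion_neighbor F x u) (Set.toFinite _)
    _ ≤ 1 + ∑ v : G.neighborSet u,
          {w | x ⟨s(u, v), v.2⟩ ∧ w ∈ avoidComp G (insert u F) x v}.ncard := by
        grw [Set.ncard_union_le, Set.ncard_singleton]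
        simpa using Finset.set_ncard_biUnion_le Finset.univ fun v : G.neighborSet u =>
          {w | x ⟨s(u, v), v.2⟩ ∧ w ∈ avoidComp G (insert u F) x v}
    _ = _ := by
        congr 1
        refine Finset.sum_congr rfl fun v _ => ?_
        split_ifs with h <;> simp [h]

-- Exploring the neighbours of `u` one generation at a time compares the cluster with a branching
-- process of mean offspring `p * d ≤ 1 / 2`.
lemma expC_ncard_avoidComp_le (hd : DegreeLE G d) (hp : p ∈ Set.Icc (0 : ℝ) 1)
    (hpd : p * (2 * d) ≤ 1) (F : Set V) (u : V) :
    expC p (fun x => ((avoidComp G F x u).ncard : ℝ)) ≤ 2 := by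
  induction F using WellFoundedGT.induction generalizing u with
  | ind F ih =>
  have := Fintype.ofFinite (G.neighborSet u)
  by_cases hu : u ∈ F
  · rw [← expC_const (E := G.edgeSet) p 2]
    refine expC_mono hp fun x => ?_
    have := Set.ncard_le_ncard (avoidComp_of_mem hu x)
    rw [Set.ncard_singleton] at this
    exact_mod_cast this.trans one_le_two
  have hdeg : (Fintype.card (G.neighborSet u) : ℝ) ≤ d := by
    exact_mod_cast (G.card_neighborSet_eq_degree u).trans_le (hd.degree_le u)
  calc expC p (fun x => ((avoidComp G F x u).ncard : ℝ))
      ≤ expC p (fun x => 1 + ∑ v : G.neighborSet u,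
          if x ⟨s(u, v), v.2⟩ then ((avoidComp G (insert u F) x v).ncard : ℝ) else 0) :=
        expC_mono hp fun x => by exact_mod_cast ncard_avoidComp_le F x u
    _ ≤ 1 + ∑ v : G.neighborSet u,
          p * expC p fun x => ((avoidComp G (insert u F) x v).ncard : ℝ) := by
        rw [expC_add, expC_const, expC_sum]
        gcongr with v
        exact expC_ite_ncard_avoidComp_le hp (Sym2.mem_mk_left u _) (Set.mem_insert u F) _
    _ ≤ 1 + ∑ v : G.neighborSet u, p * 2 := by
        gcongr with v
        · exact hp.1
        · exact ih _ (Set.ssubset_insert hu) _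
    _ = 1 + Fintype.card (G.neighborSet u) * (p * 2) := by simp
    _ ≤ 1 + d * (p * 2) := by
        have := hp.1
        gcongr
    _ ≤ 2 := by linarith

lemma expC_mergeSize_le_two (hd : DegreeLE G d) (hp : p ∈ Set.Icc (0 : ℝ) 1)
    (hpd : p * (2 * d) ≤ 1) (u v : V) : expC p (fun x => (mergeSize G u v x : ℝ)) ≤ 2 := by
  refine (expC_mono hp fun x => ?_).trans (expC_ncard_avoidComp_le hd hp hpd ∅ u)
  rw [avoidComp_empty, mergeSize]
  split_ifs
  · simp
  · exact_mod_cast min_le_left _ _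

end Subcritical

section Expansion

variable {V : Type*} {G : SimpleGraph V} {b : ℝ} {d : ℕ}

/-- The closed neighbourhood of `S`. Its iterates are the balls around `S` in `G`. -/
def closedNbhd (G : SimpleGraph V) (S : Set V) : Set V :=
  S ∪ {w | ∃ a ∈ S, G.Adj a w}

lemma id_le_closedNbhd (G : SimpleGraph V) : id ≤ closedNbhd G :=
  fun _ => Set.subset_union_left

lemma closedNbhd_mono : Monotone (closedNbhd G) := fun _ _ h =>
  Set.union_subset_union h fun _ ⟨a, ha, haw⟩ => ⟨a, h ha, haw⟩

lemma edgeBoundaryCard_compl (G : SimpleGraph V) (S : Set V) :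
    edgeBoundaryCard G Sᶜ = edgeBoundaryCard G S := by
  rw [edgeBoundaryCard, edgeBoundaryCard, ← Set.ncard_image_of_injective _ Prod.swap_injective]
  congr 1
  ext q
  simp only [Set.image_swap_eq_preimage_swap, Set.mem_preimage, Set.mem_ofPred_eq, Prod.fst_swap,
    Prod.snd_swap, Set.mem_compl_iff, not_not, G.adj_comm q.2]
  tauto

variable [Finite V]

lemma DegreeLE.edgeBoundaryCard_le (hd : DegreeLE G d) (S : Set V) :
    edgeBoundaryCard G S ≤ d * (closedNbhd G S \ S).ncard := by
  classical
  have := Fintype.ofFinite V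
  rw [edgeBoundaryCard, Set.ncard_eq_toFinset_card', Set.ncard_eq_toFinset_card']
  refine Finset.card_le_mul_card_image_of_maps_to (f := Prod.snd) (fun q hq => ?_) d fun w _ => ?_
  · simp only [Set.mem_toFinset, Set.mem_ofPred_eq] at hq ⊢
    exact ⟨.inr ⟨q.1, hq.2.1, hq.1⟩, hq.2.2⟩
  · refine le_trans ?_ (hd w)
    rw [Set.ncard_eq_toFinset_card']
    refine Finset.card_le_card_of_injOn Prod.fst (fun q hq => ?_) fun q hq q' hq' h => ?_
    · simp only [Finset.coe_filter, Set.mem_toFinset, Set.mem_ofPred_eq] at hq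
      simpa [hq.2] using hq.1.1.symm
    · simp only [Finset.coe_filter, Set.mem_ofPred_eq] at hq hq'
      exact Prod.ext h (hq.2.trans hq'.2.symm)

lemma CheegerGT.mul_min_ncard_le_edgeBoundaryCard (hG : CheegerGT G b) (S : Set V) :
    b * min S.ncard Sᶜ.ncard ≤ edgeBoundaryCard G S := by
  have hsmall (T : Set V) (hT : 2 * T.ncard ≤ Nat.card V) :
      b * T.ncard ≤ edgeBoundaryCard G T := by
    rcases T.ncard.eq_zero_or_pos with h | h
    · simp [h]
    · exact (hG T h hT).le
  have hcard := Set.ncard_add_ncard_compl S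
  rcases le_total S.ncard Sᶜ.ncard with h | h
  · rw [min_eq_left h]
    exact hsmall S (by lia)
  · rw [min_eq_right h, ← edgeBoundaryCard_compl]
    exact hsmall Sᶜ (by lia)

lemma CheegerGT.mul_min_ncard_le_ncard_closedNbhd_sdiff (hG : CheegerGT G b) (hd : DegreeLE G d)
    (S : Set V) : b / (d + 1) * min S.ncard Sᶜ.ncard ≤ (closedNbhd G S \ S).ncard := by
  rw [div_mul_eq_mul_div, div_le_iff₀ (by positivity)]
  calc b * min S.ncard Sᶜ.ncard
      ≤ d * (closedNbhd G S \ S).ncard :=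
        (hG.mul_min_ncard_le_edgeBoundaryCard S).trans (by exact_mod_cast hd.edgeBoundaryCard_le S)
    _ ≤ (closedNbhd G S \ S).ncard * (d + 1) := by
        rw [mul_comm]
        gcongr
        exact le_add_of_nonneg_right zero_le_one

-- Passing to the closed neighbourhood multiplies the odds `|S| / |Sᶜ|` by at least
-- `1 + b / (d + 1)`, whether or not `S` exceeds half of the vertices.
lemma CheegerGT.mul_odds_le_odds_closedNbhd (hG : CheegerGT G b) (hd : DegreeLE G d) (hb : 0 ≤ b)
    (S : Set V) :
    (1 + b / (d + 1)) * (S.ncard * (closedNbhd G S)ᶜ.ncard) ≤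
      (closedNbhd G S).ncard * (Sᶜ.ncard : ℝ) := by
  have hexp := hG.mul_min_ncard_le_ncard_closedNbhd_sdiff hd S
  have hS := Set.ncard_add_ncard_compl S
  have hnbhd := Set.ncard_add_ncard_compl (closedNbhd G S)
  have hdiff := Set.ncard_sdiff_add_ncard_of_subset (id_le_closedNbhd G S)
  simp only [id_eq] at hdiff
  have hcompl : (Sᶜ.ncard : ℝ) = (closedNbhd G S \ S).ncard + (closedNbhd G S)ᶜ.ncard := by
    norm_cast
    lia
  have hprod : b / (d + 1) * (S.ncard * Sᶜ.ncard) ≤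
      (closedNbhd G S \ S).ncard * (S.ncard + Sᶜ.ncard : ℝ) := by
    rw [← min_mul_max (S.ncard : ℝ), ← mul_assoc]
    push_cast at hexp
    gcongr
    exact max_le_add_of_nonneg (by positivity) (by positivity)
  have hpos : 0 ≤ b / (d + 1) * (S.ncard * (closedNbhd G S \ S).ncard) := by positivity
  rw [← hdiff]
  push_cast
  rw [hcompl] at hprod ⊢
  linarith

lemma CheegerGT.pow_mul_odds_le_odds_iterate_closedNbhd (hG : CheegerGT G b) (hd : DegreeLE G d)
    (hb : 0 ≤ b) (S : Set V) (k : ℕ) :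
    (1 + b / (d + 1)) ^ k * (S.ncard * ((closedNbhd G)^[k] S)ᶜ.ncard) ≤
      ((closedNbhd G)^[k] S).ncard * (Sᶜ.ncard : ℝ) := by
  induction k with
  | zero => simp
  | succ k ih =>
    rw [Function.iterate_succ_apply']
    rcases S.ncard.eq_zero_or_pos with hS | hS
    · simp only [hS, Nat.cast_zero, zero_mul, mul_zero]
      positivity
    set T := (closedNbhd G)^[k] S
    have hT : (0 : ℝ) < T.ncard := by
      exact_mod_cast hS.trans_le (Set.ncard_le_ncard
        (Function.id_le_iterate_of_id_le (id_le_closedNbhd G) k S) (Set.toFinite _))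
    refine le_of_mul_le_mul_left ?_ hT
    calc T.ncard * ((1 + b / (d + 1)) ^ (k + 1) * (S.ncard * (closedNbhd G T)ᶜ.ncard))
        = (1 + b / (d + 1)) ^ k * S.ncard *
            ((1 + b / (d + 1)) * (T.ncard * (closedNbhd G T)ᶜ.ncard)) := by ring
      _ ≤ (1 + b / (d + 1)) ^ k * S.ncard * ((closedNbhd G T).ncard * Tᶜ.ncard) := by
          exact mul_le_mul_of_nonneg_left (hG.mul_odds_le_odds_closedNbhd hd hb T) (by positivity)
      _ = (closedNbhd G T).ncard * ((1 + b / (d + 1)) ^ k * (S.ncard * Tᶜ.ncard)) := by ring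
      _ ≤ (closedNbhd G T).ncard * (T.ncard * Sᶜ.ncard) := by gcongr
      _ = T.ncard * ((closedNbhd G T).ncard * Sᶜ.ncard) := by ring

-- If the claim failed, both `B` and the complement of the ball of radius `2 * i` around `B`, which
-- contains the rest of `A`, would have more than `|V| / (1 + b / (d + 1)) ^ i` points.
lemma CheegerGT.min_ncard_le_add_ncard_inter_iterate_closedNbhd (hG : CheegerGT G b)
    (hd : DegreeLE G d) (hb : 0 ≤ b) (A B : Set V) (i : ℕ) :
    min (A.ncard : ℝ) B.ncard ≤
      Nat.card V / (1 + b / (d + 1)) ^ i + (A ∩ (closedNbhd G)^[2 * i] B).ncard := by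
  set N : ℝ := (Nat.card V : ℝ)
  set lam := 1 + b / (d + 1)
  have hlam : 0 < lam := by positivity
  set W := (closedNbhd G)^[2 * i] B
  have hcard_le (S : Set V) : (S.ncard : ℝ) ≤ N := Nat.cast_le.2 (Set.ncard_le_card S)
  by_contra! hlt
  rw [lt_min_iff] at hlt
  have hB : N / lam ^ i < B.ncard := lt_of_le_of_lt (le_add_of_nonneg_right (by positivity)) hlt.2
  have hW : N / lam ^ i < Wᶜ.ncard := by
    have hA : (A.ncard : ℝ) ≤ (A ∩ W).ncard + Wᶜ.ncard := by
      exact_mod_cast (Set.ncard_inter_add_ncard_sdiff_eq_ncard A W).symm.trans_le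
        (Nat.add_le_add_left (Set.ncard_le_ncard fun _ h => h.2) _)
    linarith [hlt.1]
  have hodds : lam ^ (2 * i) * (B.ncard * Wᶜ.ncard) ≤ N * N :=
    (hG.pow_mul_odds_le_odds_iterate_closedNbhd hd hb B (2 * i)).trans <|
      mul_le_mul (hcard_le _) (hcard_le _) (by positivity) (by positivity)
  refine hodds.not_gt ?_
  calc N * N = lam ^ (2 * i) * (N / lam ^ i * (N / lam ^ i)) := by
        rw [two_mul, pow_add]
        field_simp
    _ < lam ^ (2 * i) * (B.ncard * Wᶜ.ncard) := by gcongr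

end Expansion

section Contact

variable {V : Type*} {G : SimpleGraph V} {b : ℝ} {d : ℕ} {p : ℝ}

/-- When `u` and `v` lie in different clusters, the vertices of the cluster of `u` at distance at
most `k`, in `G`, from the cluster of `v`; otherwise the empty set. -/
def contactSet (G : SimpleGraph V) (u v : V) (k : ℕ) (x : G.edgeSet → Bool) : Set V :=
  {a | ¬ (percoGraph G x).Reachable u v ∧ a ∈ percoComp G x u ∧
    a ∈ (closedNbhd G)^[k] (percoComp G x v)}

lemma contactSet_zero (u v : V) (x : G.edgeSet → Bool) : contactSet G u v 0 x = ∅ := by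
  refine Set.eq_empty_of_forall_notMem fun a ⟨huv, hau, hav⟩ => huv ?_
  exact SimpleGraph.Reachable.trans hau (SimpleGraph.Reachable.symm hav)

lemma isLowerSet_not_reachable (G : SimpleGraph V) (u v : V) :
    IsLowerSet {x | ¬ (percoGraph G x).Reachable u v} :=
  fun _ _ h hx hreach => hx (hreach.mono (percoGraph_mono h))

-- Let `a` be a new contact point, joined by an edge `q` of `G` to a point `c` within distance `k`
-- of the cluster of `v`. Opening `q` either connects `u` to `v` or adds `c` to the cluster of `u`.
lemma contactSet_succ_subset (u v : V) (k : ℕ) (x : G.edgeSet → Bool) :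
    contactSet G u v (k + 1) x ⊆ contactSet G u v k x ∪
      (fun q : G.Dart => q.snd) '' {q : G.Dart |
        (¬ (percoGraph G x).Reachable u v ∧
          (percoGraph G (setEdge x ⟨q.edge, q.edge_mem⟩ true)).Reachable u v) ∨
        q.fst ∈ contactSet G u v k (setEdge x ⟨q.edge, q.edge_mem⟩ true)} := by
  rintro a ⟨huv, hau, hav⟩
  rw [Function.iterate_succ_apply'] at hav
  rcases hav with hav | ⟨c, hcv, hca⟩
  · exact .inl ⟨huv, hau, hav⟩
  refine .inr ⟨⟨(c, a), hca⟩, ?_, rfl⟩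
  set y := setEdge x ⟨s(c, a), hca⟩ true
  have hxy : x ≤ y := le_setEdge_true x _
  have hac : (percoGraph G y).Adj a c := percoGraph_setEdge_true_adj.2 (.inr Sym2.eq_swap)
  by_cases huv' : (percoGraph G y).Reachable u v
  · exact .inl ⟨huv, huv'⟩
  · exact .inr ⟨huv', mem_percoComp_of_adj (percoComp_mono u hxy hau) hac,
      closedNbhd_mono.iterate k (percoComp_mono v hxy) hcv⟩

lemma DegreeLE.sum_dart_fst_le [Fintype V] [Fintype G.Dart] (hd : DegreeLE G d) {f : V → ℝ}
    (hf : ∀ a, 0 ≤ f a) : ∑ q : G.Dart, f q.fst ≤ d * ∑ a, f a := by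
  classical
  obtain rfl : ‹Fintype G.Dart› = SimpleGraph.Dart.fintype := Subsingleton.elim _ _
  rw [← Finset.sum_fiberwise _ (fun q : G.Dart => q.fst), Finset.mul_sum]
  refine Finset.sum_le_sum fun a _ => ?_
  have hfiber : ∑ q : G.Dart with q.fst = a, f q.fst = G.degree a * f a := by
    rw [← G.dart_fst_fiber_card_eq_degree a, ← nsmul_eq_mul]
    exact Finset.sum_eq_card_nsmul fun q hq => by rw [(Finset.mem_filter.1 hq).2]
  rw [hfiber]
  exact mul_le_mul_of_nonneg_right (by exact_mod_cast hd.degree_le a) (hf a)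

lemma sum_dart_edge_eq_two_mul_sum [Fintype G.Dart] [Fintype G.edgeSet] (f : G.edgeSet → ℝ) :
    ∑ q : G.Dart, f ⟨q.edge, q.edge_mem⟩ = 2 * ∑ e, f e := by
  classical
  rw [← Finset.sum_fiberwise _ (fun q : G.Dart => (⟨q.edge, q.edge_mem⟩ : G.edgeSet)),
    Finset.mul_sum]
  refine Finset.sum_congr rfl fun ⟨e, he⟩ _ => ?_
  induction e with
  | h v w =>
    have hfiber : ({q | ⟨q.edge, q.edge_mem⟩ = (⟨s(v, w), he⟩ : G.edgeSet)} : Finset G.Dart) =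
        {⟨(v, w), he⟩, (⟨(v, w), he⟩ : G.Dart).symm} := by
      ext q
      simp only [Finset.mem_filter_univ, Subtype.mk.injEq, Finset.mem_insert, Finset.mem_singleton]
      exact SimpleGraph.dart_edge_eq_iff q ⟨(v, w), he⟩
    rw [Finset.sum_congr rfl fun q hq => by rw [(Finset.mem_filter.1 hq).2], Finset.sum_const,
      hfiber, Finset.card_pair (SimpleGraph.Dart.symm_ne _).symm, two_nsmul, two_mul]

variable [Finite V]

lemma DegreeLE.natCard_edgeSet_le (hd : DegreeLE G d) :
    Nat.card G.edgeSet ≤ d * Nat.card V := by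
  classical
  have := Fintype.ofFinite V
  have hdeg : ∑ v, G.degree v ≤ Nat.card V * d :=
    (Finset.sum_le_card_nsmul _ _ d fun v _ => hd.degree_le v).trans_eq (by simp)
  rw [Nat.card_eq_fintype_card, ← SimpleGraph.edgeFinset_card, mul_comm d]
  rw [G.sum_degrees_eq_twice_card_edges] at hdeg
  lia

lemma mul_sum_dart_probC_pivotal_le [Fintype G.Dart] (hd : DegreeLE G d)
    (hp : p ∈ Set.Icc (0 : ℝ) 1) (u v : V) :
    p * ∑ q : G.Dart, probC p {x | ¬ (percoGraph G x).Reachable u v ∧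
      (percoGraph G (setEdge x ⟨q.edge, q.edge_mem⟩ true)).Reachable u v} ≤
      2 * √(d * Nat.card V) := by
  have := Fintype.ofFinite G.edgeSet
  have hinfl := mul_sum_probC_pivotal_le_sqrt_card hp (isLowerSet_not_reachable G u v)
  simp only [Set.mem_ofPred_eq, not_not] at hinfl
  rw [sum_dart_edge_eq_two_mul_sum fun e => probC p {x | ¬ (percoGraph G x).Reachable u v ∧
      (percoGraph G (setEdge x e true)).Reachable u v}, mul_left_comm]
  grw [hinfl, ← Nat.card_eq_fintype_card, hd.natCard_edgeSet_le]
  push_cast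
  rfl

lemma mul_sum_dart_probC_contactSet_le [Fintype G.Dart] (hd : DegreeLE G d)
    (hp : p ∈ Set.Icc (0 : ℝ) 1) (u v : V) (k : ℕ) :
    p * ∑ q : G.Dart,
        probC p {x | q.fst ∈ contactSet G u v k (setEdge x ⟨q.edge, q.edge_mem⟩ true)} ≤
      d * expC p fun x => ((contactSet G u v k x).ncard : ℝ) := by
  have := Fintype.ofFinite V
  rw [expC_ncard]
  refine le_trans ?_ (hd.sum_dart_fst_le fun a => probC_nonneg hp _)
  rw [Finset.mul_sum]
  exact Finset.sum_le_sum fun q _ =>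
    probC_setEdge_true_mem_le hp {x | q.fst ∈ contactSet G u v k x} _

lemma mul_expC_ncard_contactSet_succ_le (hd : DegreeLE G d) (hp : p ∈ Set.Icc (0 : ℝ) 1) (u v : V)
    (k : ℕ) :
    p * expC p (fun x => ((contactSet G u v (k + 1) x).ncard : ℝ)) ≤
      2 * √(d * Nat.card V) + (d + 1) * expC p fun x => ((contactSet G u v k x).ncard : ℝ) := by
  classical
  have := Fintype.ofFinite V
  set z := expC p fun x => ((contactSet G u v k x).ncard : ℝ)
  set P : G.Dart → Set (G.edgeSet → Bool) := fun q => {x | ¬ (percoGraph G x).Reachable u v ∧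
      (percoGraph G (setEdge x ⟨q.edge, q.edge_mem⟩ true)).Reachable u v}
  set C : G.Dart → Set (G.edgeSet → Bool) := fun q =>
    {x | q.fst ∈ contactSet G u v k (setEdge x ⟨q.edge, q.edge_mem⟩ true)}
  have hstep : expC p (fun x => ((contactSet G u v (k + 1) x).ncard : ℝ)) ≤
      z + ∑ q, probC p (P q ∪ C q) := by
    refine le_of_le_of_eq (expC_mono hp fun x => ?_)
      ((expC_add p _ _).trans (congrArg (z + ·) (expC_ncard p fun x => {q | x ∈ P q ∪ C q})))
    have hcard : (contactSet G u v (k + 1) x).ncard ≤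
        (contactSet G u v k x).ncard + {q | x ∈ P q ∪ C q}.ncard :=
      (Set.ncard_le_ncard (contactSet_succ_subset u v k x) (Set.toFinite _)).trans <|
        (Set.ncard_union_le _ _).trans <|
          Nat.add_le_add_left (Set.ncard_image_le (Set.toFinite _)) _
    exact_mod_cast hcard
  have hpivotal : p * ∑ q, probC p (P q) ≤ 2 * √(d * Nat.card V) :=
    mul_sum_dart_probC_pivotal_le hd hp u v
  have hcontact : p * ∑ q, probC p (C q) ≤ d * z :=
    mul_sum_dart_probC_contactSet_le hd hp u v k
  have hpz : p * z ≤ z := mul_le_of_le_one_left (expC_nonneg hp fun x => by positivity) hp.2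
  calc p * expC p (fun x => ((contactSet G u v (k + 1) x).ncard : ℝ))
      ≤ p * (z + ∑ q, (probC p (P q) + probC p (C q))) := by
        refine mul_le_mul_of_nonneg_left (hstep.trans ?_) hp.1
        gcongr with q
        exact probC_union_le hp _ _
    _ = p * z + p * ∑ q, probC p (P q) + p * ∑ q, probC p (C q) := by
        rw [Finset.sum_add_distrib]
        ring
    _ ≤ z + 2 * √(d * Nat.card V) + d * z := by gcongr
    _ = 2 * √(d * Nat.card V) + (d + 1) * z := by ring

lemma mul_expC_ncard_contactSet_le (hd : DegreeLE G d) (hp : p ∈ Set.Icc (0 : ℝ) 1) (u v : V)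
    {D : ℝ} (hD : 1 ≤ D) (hpD : d + 1 ≤ p * D) (k : ℕ) :
    p * expC p (fun x => ((contactSet G u v k x).ncard : ℝ)) ≤
      2 * k * D ^ k * √(d * Nat.card V) := by
  induction k with
  | zero => simp [contactSet_zero, expC_const]
  | succ k ih =>
    set z := expC p fun x => ((contactSet G u v k x).ncard : ℝ)
    have hz0 : 0 ≤ z := expC_nonneg hp fun x => by positivity
    calc p * expC p (fun x => ((contactSet G u v (k + 1) x).ncard : ℝ))
        ≤ 2 * √(d * Nat.card V) + (d + 1) * z := mul_expC_ncard_contactSet_succ_le hd hp u v k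
      _ ≤ 2 * (1 * √(d * Nat.card V)) + p * D * z := by rw [one_mul]; gcongr
      _ = 2 * (1 * √(d * Nat.card V)) + D * (p * z) := by ring
      _ ≤ 2 * (D ^ (k + 1) * √(d * Nat.card V)) + D * (2 * k * D ^ k * √(d * Nat.card V)) := by
        gcongr
        exact one_le_pow₀ hD
      _ = 2 * ((k + 1 : ℕ) : ℝ) * D ^ (k + 1) * √(d * Nat.card V) := by
        push_cast
        ring

lemma CheegerGT.mergeSize_le (hG : CheegerGT G b) (hd : DegreeLE G d) (hb : 0 ≤ b) (u v : V)
    (i : ℕ) (x : G.edgeSet → Bool) :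
    (mergeSize G u v x : ℝ) ≤ Nat.card V / (1 + b / (d + 1)) ^ i +
      (contactSet G u v (2 * i) x).ncard := by
  by_cases huv : (percoGraph G x).Reachable u v
  · rw [mergeSize, if_pos huv, Nat.cast_zero]
    positivity
  have hcontact : contactSet G u v (2 * i) x =
      percoComp G x u ∩ (closedNbhd G)^[2 * i] (percoComp G x v) := by
    ext a
    exact and_iff_right huv
  rw [mergeSize, if_neg huv, hcontact]
  exact_mod_cast hG.min_ncard_le_add_ncard_inter_iterate_closedNbhd hd hb _ _ i

end Contact

section Assembly

lemma exists_div_pow_add_pow_mul_sqrt_le_rpow {lam Q : ℝ} (hlam : 1 < lam) (hQ : 1 < Q) :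
    ∃ δ < (1 : ℝ), ∃ K : ℝ, ∀ N : ℝ, 1 ≤ N → ∃ i : ℕ,
      N / lam ^ i + Q ^ i * √N ≤ K * N ^ δ := by
  set θ := Real.log lam / Real.log Q
  have hθ : 0 < θ := div_pos (Real.log_pos hlam) (Real.log_pos hQ)
  have hQθ : Q ^ θ = lam := by
    rw [Real.rpow_def_of_pos (by positivity), mul_div_cancel₀ _ (Real.log_pos hQ).ne',
      Real.exp_log (by positivity)]
  refine ⟨max (3 / 4) (1 - θ / 4), max_lt (by norm_num) (by linarith), lam + 1, fun N hN => ?_⟩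
  have hN0 : 0 < N := by positivity
  obtain ⟨i, hi, hi'⟩ :=
    exists_nat_pow_near (Real.one_le_rpow hN (by norm_num : (0 : ℝ) ≤ 1 / 4)) hQ
  have hpow : N ^ (θ / 4) ≤ lam ^ (i + 1) := by
    calc N ^ (θ / 4) = (N ^ (1 / 4 : ℝ)) ^ θ := by rw [← Real.rpow_mul hN0.le]; ring_nf
      _ ≤ (Q ^ (i + 1)) ^ θ := by gcongr
      _ = lam ^ (i + 1) := by
        rw [← Real.rpow_natCast, ← Real.rpow_mul (by positivity), mul_comm,
          Real.rpow_mul (by positivity), hQθ, Real.rpow_natCast]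
  have hdecay : N / lam ^ i ≤ lam * N ^ (1 - θ / 4) := by
    rw [Real.rpow_sub hN0, Real.rpow_one, mul_div_assoc', div_le_div_iff₀ (by positivity)
      (by positivity)]
    calc N * N ^ (θ / 4) ≤ N * lam ^ (i + 1) := by gcongr
      _ = lam * N * lam ^ i := by ring
  have hgrowth : Q ^ i * √N ≤ N ^ (3 / 4 : ℝ) := by
    calc Q ^ i * √N ≤ N ^ (1 / 4 : ℝ) * √N := by gcongr
      _ = N ^ (3 / 4 : ℝ) := by rw [Real.sqrt_eq_rpow, ← Real.rpow_add hN0]; norm_num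
  refine ⟨i, ?_⟩
  calc N / lam ^ i + Q ^ i * √N ≤ lam * N ^ (1 - θ / 4) + N ^ (3 / 4 : ℝ) :=
        add_le_add hdecay hgrowth
    _ ≤ lam * N ^ max (3 / 4) (1 - θ / 4) + N ^ max (3 / 4) (1 - θ / 4) := by
        gcongr
        · exact le_max_right _ _
        · exact le_max_left _ _
    _ = (lam + 1) * N ^ max (3 / 4) (1 - θ / 4) := by ring

variable {V : Type*} [Finite V] {G : SimpleGraph V} {b : ℝ} {d : ℕ} {p : ℝ}

lemma CheegerGT.mul_expC_mergeSize_le (hG : CheegerGT G b) (hd : DegreeLE G d) (hb : 0 ≤ b)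
    (hp : p ∈ Set.Icc (0 : ℝ) 1) {D : ℝ} (hD : 1 ≤ D) (hpD : d + 1 ≤ p * D) (u v : V) (i : ℕ) :
    p * expC p (fun x => (mergeSize G u v x : ℝ)) ≤
      Nat.card V / (1 + b / (d + 1)) ^ i + 4 * √d * ((2 * D ^ 2) ^ i * √(Nat.card V)) := by
  have hi : (i : ℝ) ≤ 2 ^ i := by exact_mod_cast Nat.lt_two_pow_self.le
  calc p * expC p (fun x => (mergeSize G u v x : ℝ))
      ≤ p * expC p (fun x => Nat.card V / (1 + b / (d + 1)) ^ i +
          ((contactSet G u v (2 * i) x).ncard : ℝ)) :=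
        mul_le_mul_of_nonneg_left (expC_mono hp fun x => hG.mergeSize_le hd hb u v i x) hp.1
    _ = p * (Nat.card V / (1 + b / (d + 1)) ^ i) +
          p * expC p (fun x => ((contactSet G u v (2 * i) x).ncard : ℝ)) := by
        rw [expC_add, expC_const, mul_add]
    _ ≤ Nat.card V / (1 + b / (d + 1)) ^ i +
          2 * (2 * i : ℕ) * D ^ (2 * i) * √(d * Nat.card V) :=
        add_le_add (mul_le_of_le_one_left (by positivity) hp.2)
          (mul_expC_ncard_contactSet_le hd hp u v hD hpD (2 * i))
    _ = Nat.card V / (1 + b / (d + 1)) ^ i +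
          4 * √d * (i * (D ^ 2) ^ i * √(Nat.card V)) := by
        rw [Real.sqrt_mul (by positivity), ← pow_mul]
        push_cast
        ring
    _ ≤ Nat.card V / (1 + b / (d + 1)) ^ i + 4 * √d * ((2 * D ^ 2) ^ i * √(Nat.card V)) := by
        rw [mul_pow]
        gcongr

lemma CheegerGT.norm1_deltaE_largestComp_le (hG : CheegerGT G b) (hd : DegreeLE G d) (hb : 0 ≤ b)
    (hp : p ∈ Set.Icc (0 : ℝ) 1) (e : G.edgeSet) (i : ℕ) :
    norm1 p (deltaE p (fun x => (largestComp G x : ℝ)) e) ≤ (4 + 8 * √d) *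
      (Nat.card V / (1 + b / (d + 1)) ^ i + (8 * (d + 1) ^ 4) ^ i * √(Nat.card V)) := by
  obtain ⟨⟨u, v⟩, huv⟩ := Sym2.mk_surjective (e : Sym2 V)
  refine (norm1_deltaE_largestComp_le_mergeSize hp huv.symm).trans ?_
  set a := Nat.card V / (1 + b / (d + 1)) ^ i
  have ha : 0 ≤ a := by positivity
  have hd1 : (1 : ℝ) ≤ d + 1 := le_add_of_nonneg_left d.cast_nonneg
  rcases le_or_gt (p * (2 * d)) 1 with hpd | hpd
  · have : Nonempty V := ⟨u⟩
    have hQ : (1 : ℝ) ≤ 8 * (d + 1) ^ 4 := by linarith [one_le_pow₀ (n := 4) hd1]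
    have hN : (1 : ℝ) ≤ √(Nat.card V) := by
      rw [Real.one_le_sqrt]
      exact_mod_cast Nat.card_pos
    calc 2 * (p * expC p fun x => (mergeSize G u v x : ℝ))
        ≤ 2 * (1 * 2) := by
          gcongr
          · exact expC_nonneg hp fun x => by positivity
          · exact hp.2
          · exact expC_mergeSize_le_two hd hp hpd u v
      _ = (4 + 0) * (0 + 1 ^ i * 1) := by norm_num
      _ ≤ (4 + 8 * √d) * (a + (8 * (d + 1) ^ 4) ^ i * √(Nat.card V)) := by
          gcongr
          positivity
  · have hpD : (d + 1 : ℝ) ≤ p * (2 * (d + 1) ^ 2) := by nlinarith [hp.1]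
    have hD : (1 : ℝ) ≤ 2 * (d + 1) ^ 2 := by nlinarith
    calc 2 * (p * expC p fun x => (mergeSize G u v x : ℝ))
        ≤ 2 * (a + 4 * √d * ((2 * (2 * (d + 1) ^ 2) ^ 2) ^ i * √(Nat.card V))) := by
          gcongr
          exact hG.mul_expC_mergeSize_le hd hb hp hD hpD u v i
      _ = 2 * a + 8 * √d * ((8 * (d + 1) ^ 4) ^ i * √(Nat.card V)) := by ring_nf
      _ ≤ (4 + 8 * √d) * a + (4 + 8 * √d) * ((8 * (d + 1) ^ 4) ^ i * √(Nat.card V)) := by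
          gcongr
          · linarith [Real.sqrt_nonneg (d : ℝ)]
          · linarith
      _ = (4 + 8 * √d) * (a + (8 * (d + 1) ^ 4) ^ i * √(Nat.card V)) := by ring

end Assembly

theorem stmt8_general {b : ℝ} (hb : 0 < b) (d : ℕ) :
    ∃ δ < (1 : ℝ), ∃ K : ℝ, ∀ {V : Type*} [Finite V] (G : SimpleGraph V),
      DegreeLE G d → CheegerGT G b → ∀ p ∈ Set.Icc (0 : ℝ) 1, ∀ e : G.edgeSet,
        norm1 p (deltaE p (fun x => (largestComp G x : ℝ)) e) ≤ K * (Nat.card V : ℝ) ^ δ := by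
  have hlam : 1 < 1 + b / (d + 1 : ℝ) := lt_add_of_pos_right 1 (by positivity)
  have hQ : (1 : ℝ) < 8 * (d + 1) ^ 4 := by
    linarith [one_le_pow₀ (n := 4) (le_add_of_nonneg_left d.cast_nonneg : (1 : ℝ) ≤ d + 1)]
  obtain ⟨δ, hδ, K, htradeoff⟩ := exists_div_pow_add_pow_mul_sqrt_le_rpow hlam hQ
  refine ⟨δ, hδ, (4 + 8 * √d) * K, fun {V} _ G hd hG p hp e => ?_⟩
  have : Nonempty V := ⟨(e : Sym2 V).out.1⟩
  obtain ⟨i, hi⟩ := htradeoff (Nat.card V) (by exact_mod_cast Nat.card_pos)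
  calc norm1 p (deltaE p (fun x => (largestComp G x : ℝ)) e)
      ≤ (4 + 8 * √d) *
          (Nat.card V / (1 + b / (d + 1)) ^ i + (8 * (d + 1) ^ 4) ^ i * √(Nat.card V)) :=
        hG.norm1_deltaE_largestComp_le hd hb.le hp e i
    _ ≤ (4 + 8 * √d) * (K * (Nat.card V : ℝ) ^ δ) := by gcongr
    _ = (4 + 8 * √d) * K * (Nat.card V : ℝ) ^ δ := (mul_assoc _ _ _).symm

/-- there are `δ(b,d) < 1` and `K(b,d) < ∞` such that in any `(b,d)`-expander,
`sup_p sup_{e ∈ E_n} ‖Δ_{e,p} L_n⁽¹⁾‖_{1,p} ≤ K |V_n|^δ` for every `n`. -/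
theorem stmt8 (b : ℝ) (hb : 0 < b) (d : ℕ) :
    ∃ δ < (1 : ℝ), ∃ K : ℝ,
      ∀ (E : ExpanderSeq b d) (n : ℕ), ∀ p ∈ Set.Icc (0 : ℝ) 1, ∀ e : (E.G n).edgeSet,
        norm1 p (deltaE p (fun x => (largestComp (E.G n) x : ℝ)) e) ≤
          K * (Nat.card (E.V n) : ℝ) ^ δ := by
  obtain ⟨δ, hδ, K, hK⟩ := stmt8_general hb d
  exact ⟨δ, hδ, K, fun E n => have := E.finV n; hK (E.G n) (E.degree_le n) (E.cheeger_gt n)⟩
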